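/- arXiv:2403.07928 — 5 statements merged into one kernel-verified Lean document; each statement's English description precedes it below -/
import Mathlib

section
/- In a knapsack auction allocated by the Greedy algorithm, the allocation rule is monotone in each bidder's own bid: fix the bids of all bidders other than i. If bidder i's object is packed when i submits per-unit bid b_i, then bidder i's object is also packed when i submits any per-unit bid b_i' > b_i (assuming all per-unit bids in both profiles are pairwise distinct). -/
open Finset
open scoped Classical

noncomputable section

/-- `packs K k b i` : bidder `i`'s object is packed by the Greedy algorithm when the
knapsack has capacity `K`, objects have sizes `k`, and bidders submit the (pairwise
distinct) per-unit bids `b`.  The Greedy algorithm orders bidders by strictly decreasing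
per-unit bid and fills the knapsack until the next object in line does not fit, so `i`
is packed iff every prefix of the bid-decreasing order ending at a bidder `j` with
`b j ≥ b i` fits into the knapsack. -/
def packs {n : ℕ} (K : ℝ) (k b : Fin n → ℝ) (i : Fin n) : Prop :=
  ∀ j : Fin n, b i ≤ b j → ∑ l ∈ univ.filter (fun l => b j ≤ b l), k l ≤ K

/-- **Monotonicity of the Greedy allocation rule.**  Fix the bids of all bidders other
than `i` (all per-unit bids in both profiles pairwise distinct).  If bidder `i`'s object
is packed when `i` submits per-unit bid `b i`, then it is also packed when `i` submits
any higher per-unit bid `b' i > b i`. -/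
theorem greedy_allocation_monotone {n : ℕ} (K : ℝ) (k : Fin n → ℝ)
    (hK : 0 < K) (hk : ∀ i, 0 < k i) (hkK : ∀ i, k i < K) (hsum : K < ∑ i, k i)
    (i : Fin n) (b b' : Fin n → ℝ)
    (hb : Function.Injective b) (hb' : Function.Injective b')
    (hfix : ∀ j, j ≠ i → b' j = b j) (hup : b i < b' i)
    (hpacked : packs K k b i) : packs K k b' i := by
  intro j hj
  -- Any prefix ending at or above `i` under `b'` lies inside the prefix ending at `i` under `b`:
  -- its members other than `i` kept their bids, which are at least `b' i > b i`.
  refine (sum_le_sum_of_subset_of_nonneg ?_ fun l _ _ => (hk l).le).trans (hpacked i le_rfl)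
  intro l hl
  simp only [mem_filter, mem_univ, true_and] at hl ⊢
  by_cases h : l = i
  · rw [h]
  · rw [← hfix l h]
    linarith
end
end

section
/- In the uniform-price knapsack auction, truthful bidding weakly dominates overbidding: fix the per-unit bids of all bidders other than i (pairwise distinct, and distinct from the bids of i considered). For any per-unit bid b_i' > v_i/k_i, the utility bidder i obtains by bidding v_i/k_i is at least the utility obtained by bidding b_i', for every profile of the other bidders' bids. -/
/-!
Let `demand k b x` be the total size of the objects whose per-unit bid is at least `x`; it is
antitone in `x` (`demand_antitone`). A bidder `j` is packed iff `demand k b (b j) ≤ K`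
(`packs_iff`), and the highest losing bid is the largest `x` with
`K < demand k b x` (`le_highestLosingBid`, `highestLosingBid_demand`). Raising `i`'s bid from
`t = v / k i` to `b'` does not change the demand at any `x ≤ t` (`demand_update`).

If `i` wins when truthful, the price `p` is below `t`, so the utility is nonnegative, and the excess
demand at `p` persists after overbidding, so the price cannot fall. If `i` loses when truthful,
there is excess demand at `t`, hence also after overbidding, so the price is then at least `t`
and overbidding earns at most `v - k i * t = 0`.
-/

open Finset
open scoped Classical

noncomputable section

/-- The highest losing per-unit bid (`b_{m+1}` in the paper): the largest per-unit bid
among bidders whose object is not packed by the Greedy algorithm. -/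
def highestLosingBid {n : ℕ} (K : ℝ) (k b : Fin n → ℝ) : ℝ :=
  if h : (univ.filter (fun j => ¬ packs K k b j)).Nonempty then
    (univ.filter (fun j => ¬ packs K k b j)).sup' h b
  else 0

/-- Bidder `i`'s utility in the uniform-price (UP) knapsack auction when `i`'s value is
`v` : if `i`'s object is packed, `i` realizes `v` and pays `k i` times the highest
losing per-unit bid; otherwise `i` gets `0`. -/
def upUtility {n : ℕ} (K : ℝ) (k : Fin n → ℝ) (v : ℝ) (b : Fin n → ℝ) (i : Fin n) : ℝ :=
  if packs K k b i then v - k i * highestLosingBid K k b else 0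

/-- Total size of the objects whose per-unit bid is at least `x`. -/
def demand {n : ℕ} (k b : Fin n → ℝ) (x : ℝ) : ℝ :=
  ∑ l ∈ univ.filter (fun l => x ≤ b l), k l

lemma demand_antitone {n : ℕ} {k : Fin n → ℝ} (hk : ∀ i, 0 < k i) (b : Fin n → ℝ) :
    Antitone (demand k b) := by
  intro x y hxy
  refine Finset.sum_le_sum_of_subset_of_nonneg ?_ (fun l _ _ => (hk l).le)
  intro l hl
  simp only [mem_filter, mem_univ, true_and] at hl ⊢
  exact hxy.trans hl

lemma packs_iff {n : ℕ} {K : ℝ} {k : Fin n → ℝ} (hk : ∀ i, 0 < k i) (b : Fin n → ℝ)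
    (i : Fin n) : packs K k b i ↔ demand k b (b i) ≤ K :=
  ⟨fun h => h i le_rfl, fun h _ hj => (demand_antitone hk b hj).trans h⟩

/-- A level with excess demand is at most the highest losing bid: the lowest bid above that level
faces the same demand, so it loses. -/
lemma le_highestLosingBid {n : ℕ} {K : ℝ} {k : Fin n → ℝ} (hK : 0 < K) (hk : ∀ i, 0 < k i)
    (b : Fin n → ℝ) {x : ℝ} (hx : K < demand k b x) : x ≤ highestLosingBid K k b := by
  have hne : (univ.filter (fun l => x ≤ b l)).Nonempty := by
    by_contra h
    rw [Finset.not_nonempty_iff_eq_empty] at h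
    rw [demand, h, Finset.sum_empty] at hx
    exact absurd hx hK.le.not_gt
  obtain ⟨j, hj, hmin⟩ := Finset.exists_min_image _ b hne
  simp only [mem_filter, mem_univ, true_and] at hj hmin
  have hle : demand k b x ≤ demand k b (b j) := by
    refine Finset.sum_le_sum_of_subset_of_nonneg ?_ (fun l _ _ => (hk l).le)
    intro l hl
    simp only [mem_filter, mem_univ, true_and] at hl ⊢
    exact hmin l hl
  have hlose : j ∈ univ.filter (fun j => ¬ packs K k b j) := by
    simp only [mem_filter, mem_univ, true_and, packs_iff hk, not_le]
    exact hx.trans_le hle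
  rw [highestLosingBid, dif_pos ⟨j, hlose⟩]
  exact hj.trans (Finset.le_sup' b hlose)

/-- There is excess demand at the highest losing bid. Since not all objects fit, the lowest bidder
loses, so the default value in `highestLosingBid` does not occur. -/
lemma highestLosingBid_demand {n : ℕ} {K : ℝ} {k : Fin n → ℝ} (hk : ∀ i, 0 < k i)
    (hsum : K < ∑ i, k i) (i : Fin n) (b : Fin n → ℝ) :
    K < demand k b (highestLosingBid K k b) := by
  obtain ⟨m, -, hm⟩ := Finset.exists_min_image univ b ⟨i, mem_univ i⟩
  have hlose : m ∈ univ.filter (fun j => ¬ packs K k b j) := by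
    simp only [mem_filter, mem_univ, true_and, packs_iff hk, not_le]
    rwa [demand, Finset.filter_true_of_mem hm]
  rw [highestLosingBid, dif_pos ⟨m, hlose⟩]
  obtain ⟨j, hj, hje⟩ := Finset.exists_mem_eq_sup' ⟨m, hlose⟩ b
  rw [hje]
  simpa only [mem_filter, mem_univ, true_and, packs_iff hk, not_le] using hj

lemma demand_update {n : ℕ} (k b : Fin n → ℝ) (i : Fin n) {x t b' : ℝ} (hx : x ≤ t)
    (ht : t ≤ b') :
    demand k (Function.update b i t) x = demand k (Function.update b i b') x := by
  unfold demand
  congr 1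
  ext l
  by_cases h : l = i
  · subst h
    simp [hx, hx.trans ht]
  · simp [h]

/-- **In the UP knapsack auction, truthful bidding weakly dominates overbidding.**
Fix the per-unit bids of all bidders other than `i` (pairwise distinct, and distinct
from the two bids of `i` considered).  For any per-unit bid `b' > v / k i`, bidding the
truthful per-unit bid `v / k i` yields bidder `i` at least as much utility as bidding
`b'`, for every profile `b` of the other bidders' bids. -/
theorem up_truthful_dominates_overbidding {n : ℕ} (K : ℝ) (k : Fin n → ℝ)
    (hK : 0 < K) (hk : ∀ i, 0 < k i) (hkK : ∀ i, k i < K) (hsum : K < ∑ i, k i)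
    (i : Fin n) (v : ℝ) (hv : 0 ≤ v) (b : Fin n → ℝ) (b' : ℝ)
    (hover : v / k i < b')
    (hinjT : Function.Injective (Function.update b i (v / k i)))
    (hinjD : Function.Injective (Function.update b i b')) :
    upUtility K k v (Function.update b i b') i
      ≤ upUtility K k v (Function.update b i (v / k i)) i := by
  have hki := hk i
  have hv' : k i * (v / k i) = v := mul_div_cancel₀ v hki.ne'
  set t := v / k i with ht
  have hpT := highestLosingBid_demand hk hsum i (Function.update b i t)
  unfold upUtility
  simp only [packs_iff hk, Function.update_self]
  by_cases hT : demand k (Function.update b i t) t ≤ K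
  · rw [if_pos hT]
    have hlt : highestLosingBid K k (Function.update b i t) < t := by
      by_contra! h
      exact absurd hpT ((demand_antitone hk _ h).trans hT).not_gt
    split_ifs
    · rw [demand_update k b i hlt.le hover.le] at hpT
      have := mul_le_mul_of_nonneg_left (le_highestLosingBid hK hk _ hpT) hki.le
      linarith
    · have := mul_le_mul_of_nonneg_left hlt.le hki.le
      linarith
  · rw [if_neg hT]
    split_ifs
    · rw [not_le, demand_update k b i le_rfl hover.le] at hT
      have := mul_le_mul_of_nonneg_left (le_highestLosingBid hK hk _ hT) hki.le
      linarith
    · exact le_rfl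
end
end

section
/- Critical bid, blocking case: consider a bid profile with strictly decreasing per-unit bids b_1 > ... > b_n and Greedy winner set W = {1,...,m}. Let i ∈ W be a winner such that ∑_{j ∈ W\{i}} k_j + k_{m+1} > K. Then b_{m+1} is the critical per-unit bid for i: fixing the other bidders' bids, if i submits any per-unit bid strictly below b_{m+1} then i's object is not packed by the Greedy algorithm, and if i submits any per-unit bid strictly above b_{m+1} then i's object is packed. -/
/-!
Lowering or raising `i`'s bid leaves the relative order of the other bidders unchanged.
If `i` bids below `b m`, the prefix of the new order ending at `m` includes all of `W \ {i}`
and `m`; it overflows by the blocking hypothesis, and `i` comes after it.  If `i` bids above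
`b m`, then every prefix ending no later than `i` consists of members of `W`, and `W` fits.
-/

open Finset
open scoped Classical

noncomputable section

/-- **Critical bid, blocking case.**  Consider a bid profile with strictly decreasing
per-unit bids (indexing bidders `0, 1, ..., n-1` so that `b` is strictly antitone) and
Greedy winner set `W = {j | j < m}`, the highest losing bidder being `m`.  Let `i ∈ W`
be a winner such that the objects of `W \ {i}` together with the object of `m` do not
fit (`∑_{j ∈ W \ {i}} k j + k m > K`).  Then `b m` is the critical per-unit bid for `i`:
fixing the other bidders' bids, if `i` submits any per-unit bid strictly below `b m`
then `i`'s object is not packed by the Greedy algorithm, and if `i` submits any per-unit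
bid strictly above `b m` then `i`'s object is packed. -/
theorem critical_bid_blocking_case {n : ℕ} (K : ℝ) (k b : Fin n → ℝ)
    (hK : 0 < K) (hk : ∀ i, 0 < k i) (hkK : ∀ i, k i < K) (hsum : K < ∑ i, k i)
    (hanti : StrictAnti b) (m : Fin n)
    (hWin : ∑ j ∈ univ.filter (fun j : Fin n => (j : ℕ) < (m : ℕ)), k j ≤ K)
    (hLose : K < ∑ j ∈ univ.filter (fun j : Fin n => (j : ℕ) ≤ (m : ℕ)), k j)
    (i : Fin n) (hi : (i : ℕ) < (m : ℕ))
    (hblock : K < (∑ j ∈ (univ.filter (fun j : Fin n => (j : ℕ) < (m : ℕ))).erase i, k j) + k m)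
    (c : ℝ) (hinj : Function.Injective (Function.update b i c)) :
    (c < b m → ¬ packs K k (Function.update b i c) i) ∧
    (b m < c → packs K k (Function.update b i c) i) := by
  have hself : Function.update b i c i = c := Function.update_self ..
  have hother : ∀ l, l ≠ i → Function.update b i c l = b l :=
    fun l hl => Function.update_of_ne hl ..
  have hmi : m ≠ i := by rintro rfl; exact lt_irrefl _ hi
  refine ⟨fun hc hp => ?_, fun hc j hj => ?_⟩
  · -- With `c < b m`, the prefix ending at `m` contains `W \ {i}` and `m`, so it overflows.
    have h1 := hp m (by rw [hself, hother m hmi]; exact hc.le)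
    have hnot : m ∉ (univ.filter (fun j : Fin n => (j : ℕ) < (m : ℕ))).erase i := by simp
    rw [add_comm, ← sum_insert hnot] at hblock
    refine absurd (hblock.trans_le (sum_le_sum_of_subset_of_nonneg ?_ fun l _ _ => (hk l).le))
      (not_lt.mpr h1)
    intro l hl
    rw [mem_filter, hother m hmi]
    refine ⟨mem_univ _, ?_⟩
    rcases mem_insert.mp hl with rfl | hl
    · rw [hother _ hmi]
    · obtain ⟨hli, hlW⟩ := mem_erase.mp hl
      rw [hother l hli]
      exact (hanti (Fin.lt_def.mpr (mem_filter.mp hlW).2)).le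
  · -- With `b m < c`, every bidder at or above `i`'s new position belongs to `W`.
    refine (sum_le_sum_of_subset_of_nonneg ?_ fun l _ _ => (hk l).le).trans hWin
    intro l hl
    refine mem_filter.mpr ⟨mem_univ _, ?_⟩
    by_cases hli : l = i
    · rw [hli]; exact hi
    · have h2 := hj.trans (mem_filter.mp hl).2
      rw [hself, hother l hli] at h2
      exact Fin.lt_def.mp (hanti.lt_iff_gt.mp (hc.trans_le h2))
end
end

section
/- Critical bid, non-blocking case: consider a bid profile with strictly decreasing per-unit bids b_1 > ... > b_n and Greedy winner set W = {1,...,m}. Let i ∈ W be a winner such that ∑_{j ∈ W\{i}} k_j + k_{m+1} ≤ K. Then b_{m+1} is still the critical per-unit bid for i: fixing the other bidders' bids, if i submits any per-unit bid strictly below b_{m+1} then i's object is not packed by the Greedy algorithm, and if i submits any per-unit bid strictly above b_{m+1} then i's object is packed. -/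
/-!
Let `b'` be the profile in which `i` bids `c` instead of `b i`. If `c < b m`, then the prefix of
the `b'`-order ending at `i` contains every bidder `l ≤ m`, whose objects together overflow the
knapsack, so `i` is not packed. If `b m < c`, then every prefix to be tested consists of bidders
whose bid under `b'` exceeds `b m`; since `i < m` and `b` is strictly decreasing, all of them
precede `m`, and the objects of these bidders fit.
-/

open Finset
open scoped Classical

noncomputable section

/-- **Critical bid, non-blocking case.**  Consider a bid profile with strictly decreasing
per-unit bids (indexing bidders `0, 1, ..., n-1` so that `b` is strictly antitone) and
Greedy winner set `W = {j | j < m}`, the highest losing bidder being `m`.  Let `i ∈ W`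
be a winner such that the objects of `W \ {i}` together with the object of `m` do
fit (`∑_{j ∈ W \ {i}} k j + k m ≤ K`).  Then `b m` is still the critical per-unit bid for `i`:
fixing the other bidders' bids, if `i` submits any per-unit bid strictly below `b m`
then `i`'s object is not packed by the Greedy algorithm, and if `i` submits any per-unit
bid strictly above `b m` then `i`'s object is packed. -/
theorem critical_bid_nonblocking_case {n : ℕ} (K : ℝ) (k b : Fin n → ℝ)
    (hK : 0 < K) (hk : ∀ i, 0 < k i) (hkK : ∀ i, k i < K) (hsum : K < ∑ i, k i)
    (hanti : StrictAnti b) (m : Fin n)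
    (hWin : ∑ j ∈ univ.filter (fun j : Fin n => (j : ℕ) < (m : ℕ)), k j ≤ K)
    (hLose : K < ∑ j ∈ univ.filter (fun j : Fin n => (j : ℕ) ≤ (m : ℕ)), k j)
    (i : Fin n) (hi : (i : ℕ) < (m : ℕ))
    (hfree : (∑ j ∈ (univ.filter (fun j : Fin n => (j : ℕ) < (m : ℕ))).erase i, k j) + k m ≤ K)
    (c : ℝ) (hinj : Function.Injective (Function.update b i c)) :
    (c < b m → ¬ packs K k (Function.update b i c) i) ∧
    (b m < c → packs K k (Function.update b i c) i) := by
  constructor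
  · intro hc hp
    have hp_i := hp i le_rfl
    refine absurd (hLose.trans_le (le_trans ?_ hp_i)) (lt_irrefl K)
    refine sum_le_sum_of_subset_of_nonneg ?_ fun l _ _ => (hk l).le
    intro l hl
    simp only [mem_filter, mem_univ, true_and] at hl ⊢
    rcases eq_or_ne l i with rfl | hli
    · exact le_rfl
    · rw [Function.update_self, Function.update_of_ne hli]
      exact hc.le.trans (hanti.antitone (Fin.le_def.mpr hl))
  · intro hc j hj
    rw [Function.update_self] at hj
    refine le_trans (sum_le_sum_of_subset_of_nonneg ?_ fun l _ _ => (hk l).le) hWin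
    intro l hl
    simp only [mem_filter, mem_univ, true_and] at hl ⊢
    rcases eq_or_ne l i with rfl | hli
    · exact hi
    · rw [Function.update_of_ne hli] at hl
      exact Fin.lt_def.mp (hanti.lt_iff_gt.mp (hc.trans_le (hj.trans hl)))
end
end

section
/- In the generalized second-price knapsack auction, truth-telling is not an equilibrium: there exist a number of bidders n, sizes k_1,...,k_n > 0, values v_1,...,v_n > 0, and a capacity K with k_i < K for all i and ∑_i k_i > K, such that at the truthful bid profile (each bidder i bids per-unit v_i/k_i, with these ratios pairwise distinct) some bidder i can submit a different per-unit bid, yielding pairwise distinct per-unit bids, that gives i strictly higher utility than truthful bidding. -/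
/-!
Three unit-size bidders with values `3, 2, 1` compete for a knapsack of capacity `2`, so the two
highest bidders win. Truthful bidder `0` is first in line and pays the bid `2` of bidder `1`,
for a utility of `1`. By shading the bid to `3 / 2`, bidder `0` drops to second place, still wins,
and pays only the losing bid `1`, for a utility of `2`.
-/

open Finset
open scoped Classical

noncomputable section

/-- The per-unit bid of the *next* bidder after `i` in the decreasing per-unit-bid
order: the largest per-unit bid strictly below `b i` (or `0` if `i` is last). -/
def nextBid {n : ℕ} (b : Fin n → ℝ) (i : Fin n) : ℝ :=
  if h : (univ.filter (fun j => b j < b i)).Nonempty then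
    (univ.filter (fun j => b j < b i)).sup' h b
  else 0

/-- Bidder `i`'s utility in the generalized second-price (GSP) knapsack auction when
`i`'s value is `v`: a packed bidder pays `k i` times the per-unit bid of the next
bidder in the decreasing order, so `i` gets `v - k i * nextBid b i` if packed and `0`
otherwise. -/
def gspUtility {n : ℕ} (K : ℝ) (k : Fin n → ℝ) (v : ℝ) (b : Fin n → ℝ) (i : Fin n) : ℝ :=
  if packs K k b i then v - k i * nextBid b i else 0

/-- Characterizes the next bid by exhibiting a bidder `j` who attains it. -/
lemma nextBid_eq_of_isGreatest {n : ℕ} {b : Fin n → ℝ} {i j : Fin n} (hj : b j < b i)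
    (hmax : ∀ l, b l < b i → b l ≤ b j) : nextBid b i = b j := by
  have hne : (univ.filter (fun l => b l < b i)).Nonempty := ⟨j, by simpa using hj⟩
  unfold nextBid
  rw [dif_pos hne]
  apply le_antisymm
  · exact Finset.sup'_le _ _ fun l hl => hmax l (by simpa using hl)
  · exact Finset.le_sup' b (by simpa using hj)

/-- At the bids `3, 2, 1` bidder `0` pays `2` if packed, hence has utility at most `1`. -/
lemma gspUtility_truthful_le :
    gspUtility 2 ![1, 1, 1] 3 ![3, 2, 1] (0 : Fin 3) ≤ 1 := by
  have h : nextBid ![3, 2, 1] (0 : Fin 3) = 2 :=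
    nextBid_eq_of_isGreatest (j := 1) (by norm_num)
      (by intro l; fin_cases l <;> norm_num)
  unfold gspUtility
  rw [h]
  split_ifs <;> norm_num

/-- At the bids `3 / 2, 2, 1` bidder `0` is packed second and pays `1`. -/
lemma gspUtility_shaded :
    gspUtility 2 ![1, 1, 1] 3 ![3 / 2, 2, 1] (0 : Fin 3) = 2 := by
  have h : nextBid ![3 / 2, 2, 1] (0 : Fin 3) = 1 :=
    nextBid_eq_of_isGreatest (j := 2) (by simp; norm_num)
      (by intro l; fin_cases l <;> simp <;> norm_num)
  have hp : packs 2 ![1, 1, 1] ![3 / 2, 2, 1] (0 : Fin 3) := by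
    intro j
    rw [Finset.sum_filter, Fin.sum_univ_three]
    fin_cases j <;> simp <;> norm_num
  unfold gspUtility
  rw [if_pos hp, h]
  norm_num

/-- **In the GSP knapsack auction, truth-telling is not an equilibrium.**  There exist
a number of bidders `n`, sizes `k i > 0`, values `v i > 0`, and a capacity `K > 0` with
`k i < K` for all `i` and `∑ i, k i > K`, such that at the truthful bid profile (each
bidder `i` bids per-unit `v i / k i`, these ratios being pairwise distinct) some bidder
`i` can submit a different per-unit bid `c`, yielding pairwise distinct per-unit bids,
that gives `i` strictly higher utility than truthful bidding. -/
theorem gsp_truthtelling_not_equilibrium :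
    ∃ (n : ℕ) (K : ℝ) (k v : Fin n → ℝ),
      0 < K ∧ (∀ i, 0 < k i) ∧ (∀ i, 0 < v i) ∧ (∀ i, k i < K) ∧ K < ∑ i, k i ∧
      Function.Injective (fun i => v i / k i) ∧
      ∃ (i : Fin n) (c : ℝ), c ≠ v i / k i ∧
        Function.Injective (Function.update (fun j => v j / k j) i c) ∧
        gspUtility K k (v i) (fun j => v j / k j) i
          < gspUtility K k (v i) (Function.update (fun j => v j / k j) i c) i := by
  have hb : (fun j => (![3, 2, 1] : Fin 3 → ℝ) j / (![1, 1, 1] : Fin 3 → ℝ) j) = ![3, 2, 1] := by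
    ext j; fin_cases j <;> norm_num
  have hu : Function.update (![3, 2, 1] : Fin 3 → ℝ) 0 (3 / 2) = ![3 / 2, 2, 1] := by
    ext j; fin_cases j <;> simp
  refine ⟨3, 2, ![1, 1, 1], ![3, 2, 1], by norm_num, ?_, ?_, ?_, ?_, ?_, 0, 3 / 2, ?_, ?_, ?_⟩
  · intro i; fin_cases i <;> norm_num
  · intro i; fin_cases i <;> norm_num
  · intro i; fin_cases i <;> norm_num
  · rw [Fin.sum_univ_three]; simp; norm_num
  · rw [hb]
    intro i j; fin_cases i <;> fin_cases j <;> norm_num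
  · norm_num
  · rw [hb, hu]
    intro i j; fin_cases i <;> fin_cases j <;> norm_num
  · rw [hb, hu]
    exact gspUtility_truthful_le.trans_lt (gspUtility_shaded.symm ▸ one_lt_two)
end
end
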